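/- Let p be prime and let c be a codeword of C(2,p) whose support is contained in the union of n lines through a common point P. Then rk_P(c) ≤ r if and only if c is a sum of codewords of C(2,p), each of whose support is contained in the union of some r + 2 lines through P. -/

import Mathlib

/-!
The polynomial of the line `aX + bY + cZ = 0` is `1 - (aX + bY + cZ) ^ (p - 1)`, so the polynomial
of every codeword, in any projective frame, is `k + H` with `k` constant and `H` homogeneous of
degree `p - 1` (`exists_rep`). Take coordinates with `P = (0, 0, 1)` and write
`H = ∑ h_j(X, Y) Z ^ j`, with `h_j` a binary form of degree `p - 1 - j`; the `P`-rank is at most `r`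
iff `h_j = 0` for all `j > r`. The lines through `P` correspond to the `p + 1` points `(x, y)` of
the projective line.

If the support lies on `r + 2` lines through `P`, then at the other points `(x, y)`, of which there
are at least `p - 1 - r`, the function `z ↦ k + H(x, y, z)` is zero. Its degree is less than `p`, so
`h_j(x, y) = 0` for `j ≥ 1`; for `j > r` this is more zeros than the degree of `h_j` allows
(`coeff_eq_zero_of_supp`). Since representing polynomials are unique (`isPolyRep_unique`), the bound
passes to sums.

Conversely, the constant `1` is the sum of all lines through `P`. By polarization every product of
`p - 1` linear forms is a codeword (`prod_mul_pow_mem_code`). In particular `Z ^ j` times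
`p - 1 - j` distinct forms `X - tY` is a codeword vanishing outside `j + 2` lines through `P`
(`prod_mem_pencilWords`), and these products span all `h(X, Y) Z ^ j` with `h` of degree `p - 1 - j`
(`monomial_mem_span`). Hence `k + H` is a combination of codewords supported on `r + 2` lines
whenever `H` has degree at most `r` in `Z`.
-/

attribute [local instance] Classical.propDecidable

noncomputable section

/-- Points of `PG(2,q)`: 1-dimensional subspaces of `F³`. -/
abbrev PGPoint (F : Type) [Field F] := Projectivization F (Fin 3 → F)

instance (F : Type) [Field F] [Fintype F] : Finite (PGPoint F) := Quotient.finite _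

variable {F : Type} [Field F]

/-- Incidence between a line with dual coordinates `l` and a point `P` of `PG(2,q)`. -/
def PGIncident (l P : PGPoint F) : Prop := ∑ i, l.rep i * P.rep i = 0

/-- The number of points of the multiset `M`, counted with multiplicity, on the line `l`. -/
def lineMeets (M : Multiset (PGPoint F)) (l : PGPoint F) : ℕ :=
  Multiset.countP (PGIncident l) M

/-- The multiset of all points of the line `l`, each with multiplicity one. -/
def pgLinePts [Fintype F] (l : PGPoint F) : Multiset (PGPoint F) :=
  (Set.toFinite {P | PGIncident l P}).toFinset.val

/-- The characteristic function (with values in `𝔽_p`) of the line `l`. -/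
def chi (p : ℕ) (l : PGPoint F) : PGPoint F → ZMod p :=
  fun P => if PGIncident l P then 1 else 0

/-- The code `C(2,q)`: the `𝔽_p`-linear span of the characteristic functions of lines. -/
def code (p : ℕ) (F : Type) [Field F] : Submodule (ZMod p) (PGPoint F → ZMod p) :=
  Submodule.span (ZMod p) (Set.range (chi p))

/-- The image of a point of `PG(2,p)` under the projective transformation induced
by a linear automorphism `g` of `F³`. -/
def ptMap (p : ℕ) [Fact p.Prime]
    (g : (Fin 3 → ZMod p) ≃ₗ[ZMod p] (Fin 3 → ZMod p)) :
    PGPoint (ZMod p) → PGPoint (ZMod p) :=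
  Projectivization.map g.toLinearMap g.injective

/-- `Fc` is the unique polynomial representing the function `c` on the points of
`PG(2,p)`: it has degree at most `p - 1` in each variable, it does not contain the
monomial `X^(p-1) * Y^(p-1) * Z^(p-1)`, and it computes `c` on every nonzero vector. -/
def IsPolyRep (p : ℕ) [Fact p.Prime] (c : PGPoint (ZMod p) → ZMod p)
    (Fc : MvPolynomial (Fin 3) (ZMod p)) : Prop :=
  (∀ i, Fc.degreeOf i ≤ p - 1) ∧
  Fc.coeff (Finsupp.single 0 (p - 1) + Finsupp.single 1 (p - 1) +
      Finsupp.single 2 (p - 1)) = 0 ∧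
  ∀ (v : Fin 3 → ZMod p) (hv : v ≠ 0),
    MvPolynomial.eval v Fc = c (Projectivization.mk (ZMod p) v hv)

lemma e001ne (p : ℕ) [Fact p.Prime] : (![0, 0, 1] : Fin 3 → ZMod p) ≠ 0 :=
  fun h => by simpa using congrFun h 2

/-- `rk_P(c) ≤ r`: for any projective transformation `φ` (induced by `g`) mapping
`(0,0,1)` to `P`, the `Z`-degree of the polynomial representing `c ∘ φ` is at most `r`. -/
def rkLe (p : ℕ) [Fact p.Prime] (c : PGPoint (ZMod p) → ZMod p)
    (P : PGPoint (ZMod p)) (r : ℕ) : Prop :=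
  ∀ (g : (Fin 3 → ZMod p) ≃ₗ[ZMod p] (Fin 3 → ZMod p)),
    ptMap p g (Projectivization.mk (ZMod p) ![0, 0, 1] (e001ne p)) = P →
    ∀ Fc : MvPolynomial (Fin 3) (ZMod p),
      IsPolyRep p (fun Q => c (ptMap p g Q)) Fc → Fc.degreeOf 2 ≤ r

/-! ### Polynomials of codewords -/

open MvPolynomial in
/-- Two representing polynomials of `c` differ by a polynomial of total degree less than
`3 * (p - 1)` that vanishes off the origin. Its values sum to zero, so it vanishes at the origin
too, and a polynomial reduced in each variable that vanishes everywhere is zero. -/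
lemma isPolyRep_unique (p : ℕ) [Fact p.Prime] {c : PGPoint (ZMod p) → ZMod p}
    {A B : MvPolynomial (Fin 3) (ZMod p)} (hA : IsPolyRep p c A) (hB : IsPolyRep p c B) :
    A = B := by
  have hp : 1 < p := (Fact.out : p.Prime).one_lt
  obtain ⟨hA1, hA2, hA3⟩ := hA
  obtain ⟨hB1, hB2, hB3⟩ := hB
  have hdeg : ∀ m ∈ (A - B).support, ∀ i, m i ≤ p - 1 := by
    intro m hm i
    have : (A - B).degreeOf i ≤ p - 1 :=
      (degreeOf_sub_le i A B).trans (max_le (hA1 i) (hB1 i))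
    exact degreeOf_le_iff.mp this m hm
  have hvan : ∀ v : Fin 3 → ZMod p, v ≠ 0 → eval v (A - B) = 0 := by
    intro v hv
    rw [map_sub, hA3 v hv, hB3 v hv, sub_self]
  have hsum : ∑ v, eval v (A - B) = 0 := by
    apply MvPolynomial.sum_eval_eq_zero
    rw [ZMod.card, Fintype.card_fin, totalDegree, Finset.sup_lt_iff (by simp; omega)]
    intro m hm
    have h := hdeg m hm
    have hne : m ≠ Finsupp.single 0 (p - 1) + Finsupp.single 1 (p - 1) +
        Finsupp.single 2 (p - 1) := by
      rintro rfl
      rw [mem_support_iff, coeff_sub, hA2, hB2] at hm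
      simp at hm
    rw [Finsupp.sum_fintype _ _ (by simp), Fin.sum_univ_three]
    have h0 := h 0
    have h1 := h 1
    have h2 := h 2
    by_contra hlt
    apply hne
    ext i
    fin_cases i <;> simp <;> omega
  have h0 : eval 0 (A - B) = 0 := by
    rw [Finset.sum_eq_single 0 (fun v _ hv => hvan v hv) (by simp)] at hsum
    exact hsum
  rw [← sub_eq_zero]
  apply eq_zero_of_eval_eq_zero
  · intro v
    by_cases hv : v = 0
    · rw [hv, h0]
    · exact hvan v hv
  · rw [mem_restrictDegree, ZMod.card]
    exact hdeg

lemma pgIncident_mk_right {p : ℕ} [Fact p.Prime] (l : PGPoint (ZMod p)) (v : Fin 3 → ZMod p)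
    (hv : v ≠ 0) : PGIncident l (Projectivization.mk (ZMod p) v hv) ↔ l.rep ⬝ᵥ v = 0 := by
  obtain ⟨a, ha⟩ := Projectivization.exists_smul_eq_mk_rep (ZMod p) v hv
  change l.rep ⬝ᵥ (Projectivization.mk (ZMod p) v hv).rep = 0 ↔ _
  rw [← ha, dotProduct_smul, Units.smul_def, smul_eq_mul]
  simp

/-- Every nonzero linear form is the equation of a line. -/
lemma exists_line {p : ℕ} [Fact p.Prime] (φ : (Fin 3 → ZMod p) →ₗ[ZMod p] ZMod p) (hφ : φ ≠ 0) :
    ∃ l : PGPoint (ZMod p), ∀ Q : PGPoint (ZMod p), PGIncident l Q ↔ φ Q.rep = 0 := by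
  have ha : (fun i => φ (Pi.single i 1)) ≠ 0 := by
    intro h
    apply hφ
    ext i
    simpa using congrFun h i
  refine ⟨Projectivization.mk (ZMod p) _ ha, fun Q => ?_⟩
  obtain ⟨a, h⟩ := Projectivization.exists_smul_eq_mk_rep (ZMod p) _ ha
  change (Projectivization.mk (ZMod p) _ ha).rep ⬝ᵥ Q.rep = 0 ↔ _
  have : (fun i => φ (Pi.single i 1)) ⬝ᵥ Q.rep = φ Q.rep := by
    conv_rhs => rw [pi_eq_sum_univ' Q.rep]
    simp only [map_sum, map_smul, dotProduct, smul_eq_mul]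
    refine Finset.sum_congr rfl fun i _ => ?_
    rw [mul_comm]
  rw [← h, smul_dotProduct, this, Units.smul_def, smul_eq_mul]
  simp

lemma one_sub_pow_card {p : ℕ} [Fact p.Prime] (x : ZMod p) :
    1 - x ^ (p - 1) = if x = 0 then 1 else 0 := by
  have hp : 1 < p := (Fact.out : p.Prime).one_lt
  split_ifs with h
  · rw [h, zero_pow (by omega), sub_zero]
  · rw [ZMod.pow_card_sub_one_eq_one h, sub_self]

/-- The polynomial attached to a codeword in the coordinates given by `g` is a constant plus a
form of degree `p - 1`. -/
lemma exists_rep {p : ℕ} [Fact p.Prime] (g : (Fin 3 → ZMod p) ≃ₗ[ZMod p] (Fin 3 → ZMod p))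
    {c : PGPoint (ZMod p) → ZMod p} (hc : c ∈ code p (ZMod p)) :
    ∃ (k : ZMod p) (H : MvPolynomial (Fin 3) (ZMod p)), H.IsHomogeneous (p - 1) ∧
      ∀ (v : Fin 3 → ZMod p) (hv : v ≠ 0),
        c (ptMap p g (Projectivization.mk (ZMod p) v hv)) = k + MvPolynomial.eval v H := by
  induction hc using Submodule.span_induction with
  | mem c hc =>
    obtain ⟨l, rfl⟩ := hc
    refine ⟨1, -(∑ i, MvPolynomial.C (l.rep ⬝ᵥ g (Pi.single i 1)) * MvPolynomial.X i) ^ (p - 1),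
      ?_, fun v hv => ?_⟩
    · refine MvPolynomial.IsHomogeneous.neg ?_
      have := (MvPolynomial.IsHomogeneous.sum Finset.univ
        (fun i : Fin 3 => MvPolynomial.C (l.rep ⬝ᵥ g (Pi.single i 1)) * MvPolynomial.X i) 1
        (fun i _ => MvPolynomial.isHomogeneous_C_mul_X _ i)).pow (p - 1)
      simpa using this
    · have hg : g v ≠ 0 := by simpa using hv
      have key : MvPolynomial.eval v
          (∑ i, MvPolynomial.C (l.rep ⬝ᵥ g (Pi.single i 1)) * MvPolynomial.X i)
          = l.rep ⬝ᵥ g v := by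
        have : v = ∑ i, v i • (Pi.single i 1 : Fin 3 → ZMod p) := by
          ext j; simp [Pi.single_apply]
        conv_rhs => rw [this]
        simp only [map_sum, map_smul, dotProduct_sum, dotProduct_smul, map_mul,
          MvPolynomial.eval_C, MvPolynomial.eval_X, smul_eq_mul]
        exact Finset.sum_congr rfl fun i _ => mul_comm _ _
      have hm : ptMap p g (Projectivization.mk (ZMod p) v hv) =
          Projectivization.mk (ZMod p) (g v) hg := rfl
      rw [map_neg, map_pow, key, ← sub_eq_add_neg, one_sub_pow_card, hm, chi]
      simp only [pgIncident_mk_right]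
  | zero => exact ⟨0, 0, MvPolynomial.isHomogeneous_zero _ _ _, by simp⟩
  | add c d _ _ hc hd =>
    obtain ⟨k, H, hH, h⟩ := hc
    obtain ⟨k', H', hH', h'⟩ := hd
    refine ⟨k + k', H + H', hH.add hH', fun v hv => ?_⟩
    rw [Pi.add_apply, h, h', map_add]
    ring
  | smul a c _ hc =>
    obtain ⟨k, H, hH, h⟩ := hc
    refine ⟨a * k, MvPolynomial.C a * H, ?_, fun v hv => ?_⟩
    · simpa using (MvPolynomial.isHomogeneous_C (Fin 3) a).mul hH
    · rw [Pi.smul_apply, h, map_mul, MvPolynomial.eval_C, smul_eq_mul]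
      ring

lemma homog_sum {p : ℕ} {H : MvPolynomial (Fin 3) (ZMod p)}
    {d : ℕ} (hH : H.IsHomogeneous d) {m : Fin 3 →₀ ℕ} (hm : H.coeff m ≠ 0) :
    m 0 + m 1 + m 2 = d := by
  have := hH hm
  rw [Finsupp.weight_apply, Finsupp.sum_fintype _ _ (by simp), Fin.sum_univ_three] at this
  simpa using this

lemma isPolyRep_of_homog {p : ℕ} [Fact p.Prime] {c : PGPoint (ZMod p) → ZMod p}
    {k : ZMod p} {H : MvPolynomial (Fin 3) (ZMod p)} (hH : H.IsHomogeneous (p - 1))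
    (h : ∀ (v : Fin 3 → ZMod p) (hv : v ≠ 0),
        c (Projectivization.mk (ZMod p) v hv) = k + MvPolynomial.eval v H) :
    IsPolyRep p c (MvPolynomial.C k + H) := by
  have hp : 1 < p := (Fact.out : p.Prime).one_lt
  refine ⟨fun i => ?_, ?_, fun v hv => ?_⟩
  · refine (MvPolynomial.degreeOf_add_le _ _ _).trans (max_le (by simp) ?_)
    exact (MvPolynomial.degreeOf_le_totalDegree H i).trans hH.totalDegree_le
  · have h0 : (Finsupp.single 0 (p - 1) + Finsupp.single 1 (p - 1) +
      Finsupp.single 2 (p - 1) : Fin 3 →₀ ℕ) ≠ 0 := by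
      intro h
      have := DFunLike.congr_fun h 0
      simp at this
      omega
    rw [MvPolynomial.coeff_add, MvPolynomial.coeff_C, if_neg h0.symm, zero_add]
    by_contra hne
    have := homog_sum hH hne
    simp at this
    omega
  · rw [map_add, MvPolynomial.eval_C, h]

/-! ### Codewords supported on few lines of a pencil have small rank -/

/-- If `k + H(x, y, ·)` vanishes identically on `𝔽_p`, so does the coefficient of each positive
power of `Z` in it, since its degree in `Z` is less than `p`. -/
lemma coeff_z_eq_zero {p : ℕ} [Fact p.Prime] {k : ZMod p} {H : MvPolynomial (Fin 3) (ZMod p)}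
    (hH : H.IsHomogeneous (p - 1)) (x y : ZMod p)
    (h : ∀ z, k + MvPolynomial.eval ![x, y, z] H = 0) {j : ℕ} (hj : 0 < j) :
    ∑ m ∈ H.support with m 2 = j, H.coeff m * x ^ m 0 * y ^ m 1 = 0 := by
  have hp : 1 < p := (Fact.out : p.Prime).one_lt
  set q : Polynomial (ZMod p) := Polynomial.C k +
    ∑ m ∈ H.support, Polynomial.C (H.coeff m * x ^ m 0 * y ^ m 1) * Polynomial.X ^ m 2 with hq
  have hq0 : q = 0 := by
    refine Polynomial.eq_zero_of_natDegree_lt_card_of_eval_eq_zero q Function.injective_id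
      (fun z => ?_) ?_
    · rw [← h z, MvPolynomial.eval_eq', hq]
      simp [Polynomial.eval_finsetSum, Fin.prod_univ_three, mul_assoc]
    · rw [ZMod.card]
      have : q.natDegree ≤ p - 1 := by
        refine (Polynomial.natDegree_add_le _ _).trans (max_le (by simp) ?_)
        refine Polynomial.natDegree_sum_le_of_forall_le _ _ fun m hm => ?_
        refine (Polynomial.natDegree_C_mul_X_pow_le _ _).trans ?_
        have := homog_sum hH (MvPolynomial.mem_support_iff.mp hm)
        omega
      omega
  have := congrArg (fun q => q.coeff j) hq0
  simp only [hq, Polynomial.coeff_add, Polynomial.coeff_C, hj.ne', if_false, zero_add,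
    Polynomial.finsetSum_coeff, Polynomial.coeff_C_mul_X_pow, Polynomial.coeff_zero] at this
  rw [Finset.sum_filter]
  refine (Finset.sum_congr rfl fun m _ => ?_).trans this
  simp only [eq_comm]

/-- A binary form of degree `d` that vanishes at all points of the projective line but those on
`s` given ones is zero as soon as `d + s ≤ p`. The form is given by its dehomogenization `u`, the
points by their equations `a i * X + b i * Y`; `u.coeff d` is the value of the form at `(1, 0)`. -/
lemma form_eq_zero {p : ℕ} [Fact p.Prime] {s d : ℕ} (a b : Fin s → ZMod p)
    (hab : ∀ i, a i ≠ 0 ∨ b i ≠ 0) (u : Polynomial (ZMod p)) (hu : u.natDegree ≤ d)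
    (hinf : (∀ i, a i ≠ 0) → u.coeff d = 0)
    (hfin : ∀ t, (∀ i, a i * t + b i ≠ 0) → u.eval t = 0) (hds : d + s ≤ p) : u = 0 := by
  have hp : 1 < p := (Fact.out : p.Prime).one_lt
  set L : Fin s → Polynomial (ZMod p) := fun i => Polynomial.C (a i) * Polynomial.X +
    Polynomial.C (b i) with hL
  have hLdeg : ∀ i, (L i).natDegree ≤ 1 := fun i => Polynomial.natDegree_linear_le
  have hLne : ∀ i, L i ≠ 0 := by
    intro i h
    have h1 := congrArg (fun q => q.coeff 1) h
    have h0 := congrArg (fun q => q.coeff 0) h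
    simp [hL] at h0 h1
    rcases hab i with h | h
    · exact h h1
    · exact h h0
  have hPdeg : (∏ i, L i).natDegree ≤ s := by
    refine (Polynomial.natDegree_prod_le _ _).trans ?_
    refine (Finset.sum_le_card_nsmul _ _ 1 fun i _ => hLdeg i).trans ?_
    simp
  have htop : (∏ i, L i).coeff s = ∏ i, a i := by
    have := Polynomial.coeff_prod_of_natDegree_le (s := Finset.univ) L 1 fun i _ => hLdeg i
    simpa [hL] using this
  have hw : u * ∏ i, L i = 0 := by
    by_contra hne
    have hdeg : (u * ∏ i, L i).natDegree ≤ d + s :=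
      Polynomial.natDegree_mul_le.trans (add_le_add hu hPdeg)
    have hc : (u * ∏ i, L i).coeff (d + s) = 0 := by
      rw [Polynomial.coeff_mul_add_eq_of_natDegree_le hu hPdeg, htop]
      by_cases h : ∀ i, a i ≠ 0
      · rw [hinf h, zero_mul]
      · push Not at h
        obtain ⟨i, hi⟩ := h
        rw [Finset.prod_eq_zero (Finset.mem_univ i) hi, mul_zero]
    have hlt : (u * ∏ i, L i).natDegree < d + s := by
      refine lt_of_le_of_ne hdeg fun h => hne ?_
      rw [← h] at hc
      exact Polynomial.leadingCoeff_eq_zero.mp hc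
    refine hne (Polynomial.eq_zero_of_natDegree_lt_card_of_eval_eq_zero _ Function.injective_id
      (fun t => ?_) ?_)
    · rw [Polynomial.eval_mul, Polynomial.eval_prod]
      by_cases h : ∀ i, a i * t + b i ≠ 0
      · rw [id, hfin t h, zero_mul]
      · push Not at h
        obtain ⟨i, hi⟩ := h
        rw [Finset.prod_eq_zero (Finset.mem_univ i) (by simpa [hL] using hi), mul_zero]
    · rw [ZMod.card]
      omega
  exact (mul_eq_zero.mp hw).resolve_right (Finset.prod_ne_zero_iff.mpr fun i _ => hLne i)

/-- A codeword supported on `r + 2` lines through `P` has `P`-rank at most `r`: for `j > r` the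
coefficient of `Z ^ j` is a binary form of degree `p - 1 - j` with at least `p - 1 - r` zeros. -/
lemma coeff_eq_zero_of_supp {p : ℕ} [Fact p.Prime]
    (g : (Fin 3 → ZMod p) ≃ₗ[ZMod p] (Fin 3 → ZMod p)) {c : PGPoint (ZMod p) → ZMod p}
    {k : ZMod p} {H : MvPolynomial (Fin 3) (ZMod p)} (hH : H.IsHomogeneous (p - 1))
    (h : ∀ (v : Fin 3 → ZMod p) (hv : v ≠ 0),
        c (ptMap p g (Projectivization.mk (ZMod p) v hv)) = k + MvPolynomial.eval v H)
    {r : ℕ} (l : Fin (r + 2) → PGPoint (ZMod p))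
    (hl : ∀ i, PGIncident (l i) (ptMap p g (Projectivization.mk (ZMod p) ![0, 0, 1] (e001ne p))))
    (hs : ∀ Q, c Q ≠ 0 → ∃ i, PGIncident (l i) Q) {m : Fin 3 →₀ ℕ} (hm : r < m 2) :
    H.coeff m = 0 := by
  have hp : 1 < p := (Fact.out : p.Prime).one_lt
  by_contra hne
  have hmsum := homog_sum hH hne
  have hmk : ∀ (v : Fin 3 → ZMod p) (hv : v ≠ 0),
      ptMap p g (Projectivization.mk (ZMod p) v hv) =
        Projectivization.mk (ZMod p) (g v) (by simpa using hv) := fun _ _ => rfl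
  set a : Fin (r + 2) → ZMod p := fun i => (l i).rep ⬝ᵥ g ![1, 0, 0] with ha
  set b : Fin (r + 2) → ZMod p := fun i => (l i).rep ⬝ᵥ g ![0, 1, 0] with hb
  have hl0 : ∀ i, (l i).rep ⬝ᵥ g ![0, 0, 1] = 0 := by
    intro i
    have := hl i
    rwa [hmk, pgIncident_mk_right] at this
  have hdot : ∀ i x y z, (l i).rep ⬝ᵥ g ![x, y, z] = a i * x + b i * y := by
    intro i x y z
    have : (![x, y, z] : Fin 3 → ZMod p) = x • ![1, 0, 0] + y • ![0, 1, 0] + z • ![0, 0, 1] := by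
      simp
    rw [this, map_add, map_add, map_smul, map_smul, map_smul, dotProduct_add, dotProduct_add,
      dotProduct_smul, dotProduct_smul, dotProduct_smul, hl0]
    simp [ha, hb, mul_comm]
  have hab : ∀ i, a i ≠ 0 ∨ b i ≠ 0 := by
    intro i
    by_contra hcon
    push Not at hcon
    refine (l i).rep_nonzero (dotProduct_eq_zero _ fun w => ?_)
    obtain ⟨v, rfl⟩ := g.surjective w
    have hv : v = ![v 0, v 1, v 2] := by ext i; fin_cases i <;> rfl
    rw [hv, hdot, hcon.1, hcon.2]
    simp
  have hgood : ∀ x y, (x ≠ 0 ∨ y ≠ 0) → (∀ i, a i * x + b i * y ≠ 0) →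
      ∑ n ∈ H.support with n 2 = m 2, H.coeff n * x ^ n 0 * y ^ n 1 = 0 := by
    intro x y hxy hi
    refine coeff_z_eq_zero hH x y (k := k) (fun z => ?_) (by omega)
    have hv : (![x, y, z] : Fin 3 → ZMod p) ≠ 0 := by
      intro h0
      have h1 := congrFun h0 0
      have h2 := congrFun h0 1
      simp at h1 h2
      tauto
    rw [← h _ hv]
    by_contra hc
    obtain ⟨i, hinc⟩ := hs _ hc
    rw [hmk, pgIncident_mk_right, hdot] at hinc
    exact hi i hinc
  set u : Polynomial (ZMod p) :=
    ∑ n ∈ H.support with n 2 = m 2, Polynomial.C (H.coeff n) * Polynomial.X ^ n 0 with hu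
  have hmem : ∀ n ∈ H.support.filter (fun n => n 2 = m 2), n 0 + n 1 + m 2 = p - 1 := by
    intro n hn
    rw [Finset.mem_filter] at hn
    rw [← hn.2]
    exact homog_sum hH (MvPolynomial.mem_support_iff.mp hn.1)
  have hu0 : u = 0 := by
    refine form_eq_zero (d := p - 1 - m 2) a b hab u ?_ ?_ ?_ (by omega)
    · refine Polynomial.natDegree_sum_le_of_forall_le _ _ fun n hn => ?_
      refine (Polynomial.natDegree_C_mul_X_pow_le _ _).trans ?_
      have := hmem n hn
      omega
    · intro hne
      rw [← hgood 1 0 (by simp) (by simpa using hne), hu, Polynomial.finsetSum_coeff]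
      refine Finset.sum_congr rfl fun n hn => ?_
      have := hmem n hn
      rw [Polynomial.coeff_C_mul_X_pow, one_pow, mul_one]
      by_cases h1 : n 1 = 0
      · rw [if_pos (by omega), h1, pow_zero, mul_one]
      · rw [if_neg (by omega), zero_pow h1, mul_zero]
    · intro t ht
      rw [← hgood t 1 (by simp) (by simpa using ht), hu, Polynomial.eval_finsetSum]
      simp
  have hcoeff := congrArg (fun q => q.coeff (m 0)) hu0
  simp only [hu, Polynomial.finsetSum_coeff, Polynomial.coeff_C_mul_X_pow,
    Polynomial.coeff_zero] at hcoeff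
  rw [Finset.sum_eq_single m, if_pos rfl] at hcoeff
  · exact hne hcoeff
  · intro n hn hnm
    refine if_neg fun h0 => hnm ?_
    have h1 := hmem n hn
    have h2 := (Finset.mem_filter.mp hn).2
    ext i
    fin_cases i
    · exact h0.symm
    · simp only [Fin.mk_one]
      omega
    · exact h2
  · intro hn
    simp [hne] at hn

/-! ### Codewords of small rank are sums of codewords on few lines -/

/-- The codewords whose support is contained in the union of some `r + 2` lines through `P`. -/
def pencilWords (p : ℕ) [Fact p.Prime] (P : PGPoint (ZMod p)) (r : ℕ) :
    Set (PGPoint (ZMod p) → ZMod p) :=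
  {c | c ∈ code p (ZMod p) ∧ ∃ l' : Fin (r + 2) → PGPoint (ZMod p),
    (∀ i, PGIncident (l' i) P) ∧ ∀ Q, c Q ≠ 0 → ∃ i, PGIncident (l' i) Q}

lemma chi_eq {p : ℕ} [Fact p.Prime] {φ : (Fin 3 → ZMod p) →ₗ[ZMod p] ZMod p}
    {l : PGPoint (ZMod p)} (h : ∀ Q : PGPoint (ZMod p), PGIncident l Q ↔ φ Q.rep = 0) :
    chi p l = fun Q => 1 - φ Q.rep ^ (p - 1) := by
  funext Q
  simp only [chi, h, one_sub_pow_card]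

/-- The constant function `1` is the sum of the `p + 1` lines of a pencil, here given by the
equations `y = 0` and `x - t * y = 0`. -/
lemma sum_pencil {p : ℕ} [Fact p.Prime] (x y : ZMod p) :
    (1 - y ^ (p - 1)) + ∑ t : ZMod p, (1 - (x - t * y) ^ (p - 1)) = 1 := by
  simp only [one_sub_pow_card]
  by_cases hy : y = 0
  · simp [hy]
  · rw [if_neg hy, zero_add, Finset.sum_eq_single (x / y)]
    · rw [if_pos (by field_simp; ring)]
    · intro t _ ht
      refine if_neg fun h => ht ?_
      rw [eq_div_iff hy]
      linear_combination -h
    · simp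

lemma one_mem_span {p : ℕ} [Fact p.Prime] {P : PGPoint (ZMod p)} (r : ℕ)
    {x y : (Fin 3 → ZMod p) →ₗ[ZMod p] ZMod p} (hy : y ≠ 0) (hx : ∀ t : ZMod p, x - t • y ≠ 0)
    (hxP : x P.rep = 0) (hyP : y P.rep = 0) :
    (fun _ => 1) ∈ Submodule.span (ZMod p) (pencilWords p P r) := by
  have key : ∀ φ : (Fin 3 → ZMod p) →ₗ[ZMod p] ZMod p, φ ≠ 0 → φ P.rep = 0 →
      (fun Q : PGPoint (ZMod p) => 1 - φ Q.rep ^ (p - 1)) ∈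
        Submodule.span (ZMod p) (pencilWords p P r) := by
    intro φ hφ hφP
    obtain ⟨l, hl⟩ := exists_line φ hφ
    rw [← chi_eq hl]
    refine Submodule.subset_span ⟨Submodule.subset_span ⟨l, rfl⟩, fun _ => l,
      fun _ => (hl P).mpr hφP, fun Q hQ => ⟨0, ?_⟩⟩
    by_contra hcon
    exact hQ (if_neg hcon)
  have := Submodule.add_mem _ (key y hy hyP)
    (Submodule.sum_mem _ fun t (_ : t ∈ Finset.univ) => key _ (hx t) (by simp [hxP, hyP]))
  convert this using 1
  funext Q
  rw [Pi.add_apply, Finset.sum_apply]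
  exact (sum_pencil (x Q.rep) (y Q.rep)).symm

lemma pow_mem_code {p : ℕ} [Fact p.Prime]
    (h1 : (fun _ => 1) ∈ code p (ZMod p)) (φ : (Fin 3 → ZMod p) →ₗ[ZMod p] ZMod p) :
    (fun Q : PGPoint (ZMod p) => φ Q.rep ^ (p - 1)) ∈ code p (ZMod p) := by
  have hp : 1 < p := (Fact.out : p.Prime).one_lt
  by_cases hφ : φ = 0
  · have : (fun Q : PGPoint (ZMod p) => φ Q.rep ^ (p - 1)) = 0 := by
      funext Q
      rw [hφ, LinearMap.zero_apply, zero_pow (by omega), Pi.zero_apply]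
    rw [this]
    exact Submodule.zero_mem _
  · obtain ⟨l, hl⟩ := exists_line φ hφ
    have h2 : chi p l ∈ code p (ZMod p) := Submodule.subset_span ⟨l, rfl⟩
    have := Submodule.sub_mem _ h1 h2
    rw [chi_eq hl] at this
    convert this using 1
    funext Q
    simp

lemma sum_pow_card_sub_one (p : ℕ) [Fact p.Prime] : ∑ t : ZMod p, t ^ (p - 1) = -1 := by
  have h := sum_pencil (p := p) 0 1
  simp only [one_pow, sub_self, zero_add, mul_one, zero_sub, Finset.sum_sub_distrib,
    Finset.sum_const, Finset.card_univ, ZMod.card, nsmul_eq_mul, CharP.cast_eq_zero] at h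
  rw [← Equiv.sum_comp (Equiv.neg (ZMod p))]
  simp only [Equiv.neg_apply]
  linear_combination -h

/-- Averaging `(M + t N) ^ e` over `t` against `t ^ (p - 2)` isolates the coefficient of `t`. -/
lemma sum_extract {p : ℕ} [Fact p.Prime] (M N : ZMod p) {e : ℕ} (he : e + 1 ≤ p - 1) :
    ∑ t : ZMod p, t ^ (p - 2) * (M + t * N) ^ (e + 1) = -((e + 1 : ℕ) * (N * M ^ e)) := by
  have hp : 1 < p := (Fact.out : p.Prime).one_lt
  have h1 : ∀ t : ZMod p, t ^ (p - 2) * (M + t * N) ^ (e + 1) =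
      ∑ i ∈ Finset.range (e + 1 + 1),
        t ^ (p - 2 + i) * (N ^ i * M ^ (e + 1 - i) * ((e + 1).choose i : ℕ)) := by
    intro t
    rw [add_comm M, add_pow, Finset.mul_sum]
    refine Finset.sum_congr rfl fun i _ => ?_
    rw [mul_pow, pow_add]
    ring
  simp only [h1]
  rw [Finset.sum_comm]
  simp only [← Finset.sum_mul]
  rw [Finset.sum_eq_single 1]
  · rw [show p - 2 + 1 = p - 1 by omega, sum_pow_card_sub_one, Nat.choose_one_right,
      Nat.add_sub_cancel, pow_one]
    ring
  · intro i hi hi1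
    rw [Finset.mem_range] at hi
    suffices ∑ t : ZMod p, t ^ (p - 2 + i) = 0 by rw [this, zero_mul]
    rcases Nat.eq_zero_or_pos i with rfl | hpos
    · apply FiniteField.sum_pow_lt_card_sub_one
      rw [ZMod.card]
      omega
    · -- For `i ≥ 2` one full factor `t ^ (p - 1)` can be dropped.
      rw [← FiniteField.sum_pow_lt_card_sub_one (ZMod p) (i - 1) (by rw [ZMod.card]; omega)]
      refine Finset.sum_congr rfl fun t _ => ?_
      rw [show p - 2 + i = (p - 1) + (i - 1) by omega, pow_add]
      by_cases ht : t = 0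
      · rw [ht, zero_pow (show i - 1 ≠ 0 by omega), mul_zero]
      · rw [ZMod.pow_card_sub_one_eq_one ht, one_mul]
  · intro h
    simp at h

/-- Polarization: a product of at most `p - 1` linear forms, filled up to degree `p - 1` by a
power of another linear form, is a codeword. -/
lemma prod_mul_pow_mem_code {p : ℕ} [Fact p.Prime] (h1 : (fun _ => 1) ∈ code p (ZMod p))
    (s : List ((Fin 3 → ZMod p) →ₗ[ZMod p] ZMod p)) :
    ∀ (e : ℕ) (M : (Fin 3 → ZMod p) →ₗ[ZMod p] ZMod p), s.length + e = p - 1 →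
      (fun Q : PGPoint (ZMod p) => (s.map fun φ => φ Q.rep).prod * M Q.rep ^ e) ∈
        code p (ZMod p) := by
  have hp : 1 < p := (Fact.out : p.Prime).one_lt
  induction s with
  | nil =>
    intro e M he
    obtain rfl : e = p - 1 := by simpa using he
    simpa using pow_mem_code h1 M
  | cons N s ih =>
    intro e M he
    rw [List.length_cons] at he
    have hsum := Submodule.sum_mem _ fun t (_ : t ∈ Finset.univ) =>
      Submodule.smul_mem _ (t ^ (p - 2)) (ih (e + 1) (M + t • N) (by omega))
    have he0 : ((e + 1 : ℕ) : ZMod p) ≠ 0 := by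
      rw [Ne, ZMod.natCast_eq_zero_iff]
      intro hdvd
      have := Nat.le_of_dvd (Nat.succ_pos e) hdvd
      omega
    have := Submodule.smul_mem _ (-((e + 1 : ℕ) : ZMod p)⁻¹) hsum
    convert this using 1
    funext Q
    have key := sum_extract (M Q.rep) (N Q.rep) (e := e) (by omega)
    simp only [Pi.smul_apply, Finset.sum_apply, smul_eq_mul, LinearMap.add_apply,
      LinearMap.smul_apply, List.map_cons, List.prod_cons]
    have h2 : ∑ t : ZMod p, t ^ (p - 2) * ((s.map fun φ => φ Q.rep).prod *
        (M Q.rep + t * N Q.rep) ^ (e + 1)) = (s.map fun φ => φ Q.rep).prod *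
        -((e + 1 : ℕ) * (N Q.rep * M Q.rep ^ e)) := by
      rw [← key, Finset.mul_sum]
      exact Finset.sum_congr rfl fun t _ => by ring
    rw [h2]
    field_simp

/-- A product of `p - 1 - j` distinct linear forms of the pencil at `P`, times `z ^ j`, is a
codeword vanishing outside the remaining `j + 2` lines of the pencil. -/
lemma prod_mem_pencilWords {p : ℕ} [Fact p.Prime] {P : PGPoint (ZMod p)} {r : ℕ}
    {x y z : (Fin 3 → ZMod p) →ₗ[ZMod p] ZMod p} (hy : y ≠ 0)
    (hx : ∀ t : ZMod p, x - t • y ≠ 0) (hxP : x P.rep = 0) (hyP : y P.rep = 0)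
    (h1 : (fun _ => 1) ∈ code p (ZMod p)) (T : Finset (ZMod p)) {j : ℕ}
    (hT : T.card + j = p - 1) (hj : j ≤ r) :
    (fun Q : PGPoint (ZMod p) => (∏ t ∈ T, (x Q.rep - t * y Q.rep)) * z Q.rep ^ j) ∈
      pencilWords p P r := by
  have hp : 1 < p := (Fact.out : p.Prime).one_lt
  constructor
  · have := prod_mul_pow_mem_code h1 (T.toList.map fun t => x - t • y) j z (by simpa using hT)
    convert this using 3 with Q
    rw [List.map_map, ← Finset.prod_map_toList]
    rfl
  · obtain ⟨ly, hly⟩ := exists_line y hy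
    choose lt hlt using fun t => exists_line (x - t • y) (hx t)
    set L : List (PGPoint (ZMod p)) := (Tᶜ).toList.map lt with hL
    have hlen : L.length ≤ r + 1 := by
      have := Finset.card_add_card_compl T
      rw [ZMod.card] at this
      simp only [hL, List.length_map, Finset.length_toList]
      omega
    refine ⟨fun i => L.getD i ly, fun i => ?_, fun Q hQ => ?_⟩
    · beta_reduce
      rcases lt_or_ge i.val L.length with hi | hi
      · rw [List.getD_eq_getElem _ _ hi]
        obtain ⟨t, -, ht⟩ := List.mem_map.mp (List.getElem_mem hi)
        rw [← ht, hlt]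
        simp [hxP, hyP]
      · rw [List.getD_eq_default _ _ hi, hly, hyP]
    · by_cases hyQ : y Q.rep = 0
      · refine ⟨Fin.last _, ?_⟩
        beta_reduce
        rw [List.getD_eq_default _ _ (by simpa using hlen), hly, hyQ]
      · have hxt : x Q.rep - (x Q.rep / y Q.rep) * y Q.rep = 0 := by
          field_simp
          ring
        have hmem : lt (x Q.rep / y Q.rep) ∈ L := by
          rw [hL, List.mem_map]
          refine ⟨_, ?_, rfl⟩
          rw [Finset.mem_toList, Finset.mem_compl]
          intro hT
          refine hQ ?_
          beta_reduce
          rw [Finset.prod_eq_zero hT hxt, zero_mul]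
        obtain ⟨i, hi, hLi⟩ := List.getElem_of_mem hmem
        refine ⟨⟨i, by omega⟩, ?_⟩
        simp only
        rw [List.getD_eq_getElem _ _ hi, hLi, hlt]
        simpa using hxt

/-- The forms `x ^ a * y ^ b * z ^ j * ∏ t ∈ T, (x - t * y)` of degree `p - 1` with `j ≤ r` lie in the span of the pencil words. Powers of `y`
are removed through `(s - t) * y = (x - t * y) - (x - s * y)`, powers of `x` through
`x = (x - t * y) + t * y`, each time with parameters not yet in `T`. -/
lemma monomial_mem_span {p : ℕ} [Fact p.Prime] {P : PGPoint (ZMod p)} {r : ℕ}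
    {x y z : (Fin 3 → ZMod p) →ₗ[ZMod p] ZMod p} (hy : y ≠ 0)
    (hx : ∀ t : ZMod p, x - t • y ≠ 0) (hxP : x P.rep = 0) (hyP : y P.rep = 0)
    (h1 : (fun _ => 1) ∈ code p (ZMod p)) {j : ℕ} (hj : j ≤ r) (a : ℕ) :
    ∀ (b : ℕ) (T : Finset (ZMod p)), a + b + T.card + j = p - 1 →
    (fun Q : PGPoint (ZMod p) => x Q.rep ^ a * y Q.rep ^ b *
      ((∏ t ∈ T, (x Q.rep - t * y Q.rep)) * z Q.rep ^ j)) ∈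
      Submodule.span (ZMod p) (pencilWords p P r) := by
  have hp : 1 < p := (Fact.out : p.Prime).one_lt
  have hnew : ∀ T : Finset (ZMod p), T.card < p → ∃ t, t ∉ T := by
    intro T hT
    by_contra hcon
    push Not at hcon
    rw [Finset.eq_univ_iff_forall.mpr hcon, Finset.card_univ, ZMod.card] at hT
    omega
  induction a with
  | zero =>
    intro b
    induction b with
    | zero =>
      intro T hT
      simpa using Submodule.subset_span
        (prod_mem_pencilWords (z := z) hy hx hxP hyP h1 T (by omega) hj)
    | succ b ih =>
      intro T hT
      obtain ⟨s, hs⟩ := hnew T (by omega)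
      obtain ⟨t, ht⟩ := hnew (insert s T) (by rw [Finset.card_insert_of_notMem hs]; omega)
      rw [Finset.mem_insert, not_or] at ht
      have hst : s - t ≠ 0 := sub_ne_zero.mpr (Ne.symm ht.1)
      have e1 := ih (insert s T) (by rw [Finset.card_insert_of_notMem hs]; omega)
      have e2 := ih (insert t T) (by rw [Finset.card_insert_of_notMem ht.2]; omega)
      have := Submodule.smul_mem _ (s - t)⁻¹ (Submodule.sub_mem _ e2 e1)
      convert this using 1
      funext Q
      simp only [Pi.smul_apply, Pi.sub_apply, smul_eq_mul, Finset.prod_insert hs,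
        Finset.prod_insert ht.2]
      rw [eq_inv_mul_iff_mul_eq₀ hst]
      ring
  | succ a ih =>
    intro b T hT
    obtain ⟨t, ht⟩ := hnew T (by omega)
    have e1 := ih b (insert t T) (by rw [Finset.card_insert_of_notMem ht]; omega)
    have e2 := Submodule.smul_mem _ t (ih (b + 1) T (by omega))
    convert Submodule.add_mem _ e1 e2 using 1
    funext Q
    simp only [Pi.smul_apply, Pi.add_apply, smul_eq_mul, Finset.prod_insert ht]
    ring

/-- A codeword of `P`-rank at most `r`, given by its polynomial `k + H` in the coordinates of `g`,
is a combination of codewords supported on `r + 2` lines through `P`. -/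
lemma mem_span_of_coeff {p : ℕ} [Fact p.Prime]
    (g : (Fin 3 → ZMod p) ≃ₗ[ZMod p] (Fin 3 → ZMod p)) {P : PGPoint (ZMod p)}
    (hg : ptMap p g (Projectivization.mk (ZMod p) ![0, 0, 1] (e001ne p)) = P)
    {c : PGPoint (ZMod p) → ZMod p}
    {k : ZMod p} {H : MvPolynomial (Fin 3) (ZMod p)} (hH : H.IsHomogeneous (p - 1))
    (h : ∀ (v : Fin 3 → ZMod p) (hv : v ≠ 0),
        c (ptMap p g (Projectivization.mk (ZMod p) v hv)) = k + MvPolynomial.eval v H)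
    {r : ℕ} (hr : ∀ m, H.coeff m ≠ 0 → m 2 ≤ r) :
    c ∈ Submodule.span (ZMod p) (pencilWords p P r) := by
  set co : Fin 3 → (Fin 3 → ZMod p) →ₗ[ZMod p] ZMod p :=
    fun i => LinearMap.proj i ∘ₗ g.symm.toLinearMap with hco
  have hcog : ∀ i v, co i (g v) = v i := by simp [hco]
  have hy : co 1 ≠ 0 := by
    intro h0
    have := hcog 1 ![0, 1, 0]
    simp [h0] at this
  have hx : ∀ t : ZMod p, co 0 - t • co 1 ≠ 0 := by
    intro t h0
    have := congrArg (fun φ => φ (g ![1, 0, 0])) h0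
    simp [hcog] at this
  have hP : ∃ a : ZMod p, P.rep = g (a • ![0, 0, 1]) := by
    obtain ⟨a, ha⟩ := Projectivization.exists_smul_eq_mk_rep (ZMod p) (g ![0, 0, 1])
      (by simp)
    refine ⟨a, ?_⟩
    rw [← hg, map_smul]
    exact ha.symm
  obtain ⟨a, ha⟩ := hP
  have hxP : co 0 P.rep = 0 := by rw [ha, hcog]; simp
  have hyP : co 1 P.rep = 0 := by rw [ha, hcog]; simp
  have h1 := one_mem_span r hy hx hxP hyP
  have h1c : (fun _ => 1) ∈ code p (ZMod p) :=
    Submodule.span_le.mpr (fun c hc => hc.1) h1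
  have hsum := Submodule.sum_mem _ fun m (hm : m ∈ H.support) =>
    Submodule.smul_mem _ (H.coeff m) (monomial_mem_span (z := co 2) hy hx hxP hyP h1c
      (hr m (MvPolynomial.mem_support_iff.mp hm)) (m 0) (m 1) ∅ (by
        simpa using homog_sum hH (MvPolynomial.mem_support_iff.mp hm)))
  convert Submodule.add_mem _ (Submodule.smul_mem _ k h1) hsum using 1
  funext Q
  have hw : g.symm Q.rep ≠ 0 := by simpa using Q.rep_nonzero
  have hQ : ptMap p g (Projectivization.mk (ZMod p) (g.symm Q.rep) hw) = Q := by
    conv_rhs => rw [← Q.mk_rep]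
    change Projectivization.mk (ZMod p) (g (g.symm Q.rep)) _ = _
    simp
  have := h _ hw
  rw [hQ, MvPolynomial.eval_eq'] at this
  rw [this]
  simp [Fin.prod_univ_three, hco, mul_assoc]

/-- Some projective transformation maps `(0, 0, 1)` to `P`. -/
lemma exists_frame {p : ℕ} [Fact p.Prime] (P : PGPoint (ZMod p)) :
    ∃ g : (Fin 3 → ZMod p) ≃ₗ[ZMod p] (Fin 3 → ZMod p),
      ptMap p g (Projectivization.mk (ZMod p) ![0, 0, 1] (e001ne p)) = P := by
  have : MulAction.IsPretransitive ((Fin 3 → ZMod p) ≃ₗ[ZMod p] (Fin 3 → ZMod p))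
      (PGPoint (ZMod p)) :=
    MulAction.isPretransitive_of_is_two_pretransitive
  obtain ⟨g, hg⟩ := MulAction.exists_smul_eq ((Fin 3 → ZMod p) ≃ₗ[ZMod p] (Fin 3 → ZMod p))
    (Projectivization.mk (ZMod p) ![0, 0, 1] (e001ne p)) P
  exact ⟨g, hg⟩

theorem stmt14 (p : ℕ) [Fact p.Prime]
    (c : PGPoint (ZMod p) → ZMod p) (hc : c ∈ code p (ZMod p))
    (n : ℕ) (l : Fin n → PGPoint (ZMod p)) (P : PGPoint (ZMod p))
    (hP : ∀ i, PGIncident (l i) P)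
    (hsupp : ∀ Q, c Q ≠ 0 → ∃ i, PGIncident (l i) Q) (r : ℕ) :
    rkLe p c P r ↔
      ∃ (m : ℕ) (cs : Fin m → (PGPoint (ZMod p) → ZMod p)),
        (∀ j, cs j ∈ code p (ZMod p)) ∧
        (∀ j, ∃ l' : Fin (r + 2) → PGPoint (ZMod p),
          (∀ i, PGIncident (l' i) P) ∧ ∀ Q, cs j Q ≠ 0 → ∃ i, PGIncident (l' i) Q) ∧
        c = ∑ j, cs j := by
  constructor
  · intro hrk
    obtain ⟨g, hg⟩ := exists_frame P
    obtain ⟨k, H, hH, h⟩ := exists_rep g hc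
    have hdeg := hrk g hg _ (isPolyRep_of_homog hH h)
    have hspan : c ∈ Submodule.span (ZMod p) (pencilWords p P r) := by
      refine mem_span_of_coeff g hg hH h fun m hm => ?_
      rcases Nat.eq_zero_or_pos (m 2) with h0 | hpos
      · omega
      · refine MvPolynomial.degreeOf_le_iff.mp hdeg m ?_
        have hm0 : (0 : Fin 3 →₀ ℕ) ≠ m := by
          rintro rfl
          simp at hpos
        rw [MvPolynomial.mem_support_iff, MvPolynomial.coeff_add, MvPolynomial.coeff_C,
          if_neg hm0, zero_add]
        exact hm
    obtain ⟨m, f, w, hsum⟩ := Submodule.mem_span_set'.mp hspan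
    refine ⟨m, fun j => f j • (w j).1, fun j => Submodule.smul_mem _ _ (w j).2.1, fun j => ?_,
      hsum.symm⟩
    obtain ⟨l', hl', hs⟩ := (w j).2.2
    refine ⟨l', hl', fun Q hQ => hs Q fun h0 => hQ ?_⟩
    beta_reduce
    rw [Pi.smul_apply, h0, smul_zero]
  · rintro ⟨m, cs, hcs, hl, rfl⟩ g hg Fc hFc
    choose k H hH h using fun j => exists_rep g (hcs j)
    have hsum : IsPolyRep p (fun Q => (∑ j, cs j) (ptMap p g Q))
        (MvPolynomial.C (∑ j, k j) + ∑ j, H j) := by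
      refine isPolyRep_of_homog (MvPolynomial.IsHomogeneous.sum _ _ _ fun j _ => hH j)
        fun v hv => ?_
      rw [Finset.sum_apply, map_sum, ← Finset.sum_add_distrib]
      exact Finset.sum_congr rfl fun j _ => h j v hv
    rw [isPolyRep_unique p hFc hsum]
    refine (MvPolynomial.degreeOf_add_le _ _ _).trans (max_le (by rw [MvPolynomial.degreeOf_C]; omega) ?_)
    refine (MvPolynomial.degreeOf_sum_le _ _ _).trans (Finset.sup_le fun j _ => ?_)
    rw [MvPolynomial.degreeOf_le_iff]
    intro n hn
    by_contra hlt
    obtain ⟨l', hl', hs⟩ := hl j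
    exact MvPolynomial.mem_support_iff.mp hn
      (coeff_eq_zero_of_supp g (hH j) (h j) l' (fun i => hg ▸ hl' i) hs (not_le.mp hlt))

end
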